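/- Let d ≥ 1, α ∈ (1,2), and θ > 1 − α/2. Let f : ℝ^d → ℝ be continuously differentiable with |∇f(x)| ≤ C₀ and |f(x)| ≤ C₀(1+|x|²)^{(1−θ)/2} + C₀ for all x ∈ ℝ^d and some constant C₀ > 0, and let μ be a probability measure on ℝ^d with ∫_{ℝ^d} (1+|x|²)^{1−θ} μ(dx) < ∞. Then the asymptotic variance V(f) := ∫_{ℝ^d} ∫_{ℝ^d∖{0}} [f(x+z) − f(x)]² C_{d,α} |z|^{−(α+d)} dz μ(dx) is finite. -/

import Mathlib

open MeasureTheory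

/-!
With `p = max (1 - θ) 0 < 1`, the increment satisfies
`|f (x + z) - f x| ≤ A (1 + |x|²)^(p/2) min(|z|, |z|^p)`: for `|z| ≤ 1` because `f` is Lipschitz,
for `|z| ≥ 1` because of the growth of `f` and Peetre's inequality. This bound separates the
variables, so `V(f)` is dominated by the product of the moment `∫ (1 + |x|²)^p dμ` and the integral
of `min(|z|, |z|^p)²` against the Lévy measure; the latter is finite since `2 p < α < 2`.
-/

section Increments

variable {E F : Type*} [SeminormedAddCommGroup E] [SeminormedAddCommGroup F] {f : E → F}

theorem one_add_norm_add_sq_le (x z : E) :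
    1 + ‖x + z‖ ^ 2 ≤ 2 * (1 + ‖x‖ ^ 2) * (1 + ‖z‖ ^ 2) := by
  have htri : ‖x + z‖ ^ 2 ≤ (‖x‖ + ‖z‖) ^ 2 := by gcongr; exact norm_add_le x z
  nlinarith [sq_nonneg (‖x‖ - ‖z‖), mul_nonneg (sq_nonneg ‖x‖) (sq_nonneg ‖z‖)]

theorem one_add_norm_add_sq_rpow_le {p : ℝ} (hp : 0 ≤ p) (x : E) {z : E} (hz : 1 ≤ ‖z‖) :
    (1 + ‖x + z‖ ^ 2) ^ (p / 2) ≤ 2 ^ p * (1 + ‖x‖ ^ 2) ^ (p / 2) * ‖z‖ ^ p := by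
  have hsq : 1 + ‖x + z‖ ^ 2 ≤ 2 ^ 2 * (1 + ‖x‖ ^ 2) * ‖z‖ ^ 2 :=
    calc 1 + ‖x + z‖ ^ 2 ≤ 2 * (1 + ‖x‖ ^ 2) * (1 + ‖z‖ ^ 2) := one_add_norm_add_sq_le x z
      _ ≤ 2 * (1 + ‖x‖ ^ 2) * (‖z‖ ^ 2 + ‖z‖ ^ 2) := by gcongr; exact one_le_pow₀ hz
      _ = 2 ^ 2 * (1 + ‖x‖ ^ 2) * ‖z‖ ^ 2 := by ring
  have hroot {r : ℝ} (hr : 0 ≤ r) : (r ^ 2) ^ (p / 2) = r ^ p := by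
    rw [← Real.rpow_natCast_mul hr]
    congr 1
    push_cast
    ring
  calc (1 + ‖x + z‖ ^ 2) ^ (p / 2) ≤ (2 ^ 2 * (1 + ‖x‖ ^ 2) * ‖z‖ ^ 2) ^ (p / 2) := by gcongr
    _ = 2 ^ p * (1 + ‖x‖ ^ 2) ^ (p / 2) * ‖z‖ ^ p := by
      rw [Real.mul_rpow (by positivity) (by positivity), Real.mul_rpow (by positivity)
        (by positivity), hroot zero_le_two, hroot (norm_nonneg z)]

theorem one_le_one_add_norm_sq_rpow {p : ℝ} (hp : 0 ≤ p) (x : E) : 1 ≤ (1 + ‖x‖ ^ 2) ^ p :=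
  Real.one_le_rpow (le_add_of_nonneg_right (sq_nonneg _)) hp

theorem norm_add_sub_le_of_norm_le_rpow {C p : ℝ} (hp : 0 ≤ p)
    (hf : ∀ x, ‖f x‖ ≤ C * (1 + ‖x‖ ^ 2) ^ (p / 2)) (x : E) {z : E} (hz : 1 ≤ ‖z‖) :
    ‖f (x + z) - f x‖ ≤ (2 ^ p + 1) * C * (1 + ‖x‖ ^ 2) ^ (p / 2) * ‖z‖ ^ p := by
  have hC : 0 ≤ C := nonneg_of_mul_nonneg_left ((norm_nonneg _).trans (hf 0)) (by positivity)
  calc ‖f (x + z) - f x‖ ≤ ‖f (x + z)‖ + ‖f x‖ := norm_sub_le _ _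
    _ ≤ C * (1 + ‖x + z‖ ^ 2) ^ (p / 2) + C * (1 + ‖x‖ ^ 2) ^ (p / 2) := add_le_add (hf _) (hf _)
    _ ≤ C * (2 ^ p * (1 + ‖x‖ ^ 2) ^ (p / 2) * ‖z‖ ^ p) +
        C * ((1 + ‖x‖ ^ 2) ^ (p / 2) * ‖z‖ ^ p) := by
      gcongr
      · exact one_add_norm_add_sq_rpow_le hp x hz
      · exact le_mul_of_one_le_right (by positivity) (Real.one_le_rpow hz hp)
    _ = (2 ^ p + 1) * C * (1 + ‖x‖ ^ 2) ^ (p / 2) * ‖z‖ ^ p := by ring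

theorem norm_add_sub_le_mul_min {K : NNReal} {C p : ℝ} (hp0 : 0 ≤ p) (hp1 : p ≤ 1)
    (hlip : LipschitzWith K f) (hf : ∀ x, ‖f x‖ ≤ C * (1 + ‖x‖ ^ 2) ^ (p / 2)) (x z : E) :
    ‖f (x + z) - f x‖ ≤
      (K + (2 ^ p + 1) * C) * (1 + ‖x‖ ^ 2) ^ (p / 2) * min ‖z‖ (‖z‖ ^ p) := by
  have hC : 0 ≤ C := nonneg_of_mul_nonneg_left ((norm_nonneg _).trans (hf 0)) (by positivity)
  rcases le_total ‖z‖ 1 with hz | hz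
  · have hmin : min ‖z‖ (‖z‖ ^ p) = ‖z‖ :=
      min_eq_left (Real.self_le_rpow_of_le_one (norm_nonneg z) hz hp1)
    have hK : (K : ℝ) ≤ (K + (2 ^ p + 1) * C) * (1 + ‖x‖ ^ 2) ^ (p / 2) :=
      (le_add_of_nonneg_right (by positivity)).trans
        (le_mul_of_one_le_right (by positivity) (one_le_one_add_norm_sq_rpow (by positivity) x))
    calc ‖f (x + z) - f x‖ ≤ K * ‖z‖ := by simpa using hlip.norm_sub_le (x + z) x
      _ ≤ (K + (2 ^ p + 1) * C) * (1 + ‖x‖ ^ 2) ^ (p / 2) * min ‖z‖ (‖z‖ ^ p) := by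
        rw [hmin]
        gcongr
  · rw [min_eq_right (Real.rpow_le_self_of_one_le hz hp1)]
    refine (norm_add_sub_le_of_norm_le_rpow hp0 hf x hz).trans ?_
    gcongr
    exact le_add_of_nonneg_left K.coe_nonneg

theorem norm_le_rpow_max_of_norm_le_rpow_add {C s : ℝ}
    (hf : ∀ x, ‖f x‖ ≤ C * (1 + ‖x‖ ^ 2) ^ (s / 2) + C) (x : E) :
    ‖f x‖ ≤ 2 * C * (1 + ‖x‖ ^ 2) ^ (max s 0 / 2) := by
  have hC : 0 ≤ C := by
    have h0 : 0 ≤ C * ((1 + ‖(0 : E)‖ ^ 2) ^ (s / 2) + 1) := by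
      simpa only [mul_add, mul_one] using (norm_nonneg _).trans (hf 0)
    exact nonneg_of_mul_nonneg_left h0 (by positivity)
  calc ‖f x‖ ≤ C * (1 + ‖x‖ ^ 2) ^ (s / 2) + C * 1 := by simpa using hf x
    _ ≤ C * (1 + ‖x‖ ^ 2) ^ (max s 0 / 2) + C * (1 + ‖x‖ ^ 2) ^ (max s 0 / 2) := by
      gcongr
      · exact le_add_of_nonneg_right (sq_nonneg _)
      · exact le_max_left _ _
      · exact one_le_one_add_norm_sq_rpow (by positivity) x
    _ = 2 * C * (1 + ‖x‖ ^ 2) ^ (max s 0 / 2) := by ring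

end Increments

theorem lipschitzWith_of_norm_gradient_le {E : Type*} [NormedAddCommGroup E]
    [InnerProductSpace ℝ E] [CompleteSpace E] {f : E → ℝ} {C : NNReal} (hf : Differentiable ℝ f)
    (hC : ∀ x, ‖gradient f x‖ ≤ C) : LipschitzWith C f :=
  lipschitzWith_of_nnnorm_fderiv_le hf fun x => by
    simpa only [gradient, LinearIsometryEquiv.norm_map, ← NNReal.coe_le_coe, coe_nnnorm] using hC x

section SeparatedBound

variable {E F : Type*} [TopologicalSpace E] [Add E] [ContinuousAdd E] [MeasurableSpace E]
  [OpensMeasurableSpace E] [SeminormedAddCommGroup F] {f : E → F} {u m k : E → ℝ} {ν : Measure E}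

theorem norm_sq_mul_le_norm_sq_mul {t a b : ℝ} (ht : 0 ≤ t) (htab : t ≤ a * b) (k : ℝ) :
    ‖t ^ 2 * k‖ ≤ ‖a ^ 2 * (b ^ 2 * k)‖ := by
  rw [← mul_assoc, ← mul_pow, norm_mul, norm_mul, norm_pow, norm_pow]
  gcongr
  exact abs_le_abs_of_nonneg ht htab

theorem integrable_norm_add_sub_sq_mul (hf : Continuous f)
    (hfum : ∀ x z, ‖f (x + z) - f x‖ ≤ u x * m z) (hk : AEStronglyMeasurable k ν)
    (hm : Integrable (fun z => m z ^ 2 * k z) ν) (x : E) :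
    Integrable (fun z => ‖f (x + z) - f x‖ ^ 2 * k z) ν := by
  have hcont : Continuous fun z => ‖f (x + z) - f x‖ ^ 2 := by fun_prop
  exact (hm.const_mul (u x ^ 2)).mono (hcont.measurable.aestronglyMeasurable.mul hk)
    (.of_forall fun z => norm_sq_mul_le_norm_sq_mul (norm_nonneg _) (hfum x z) (k z))

theorem integrable_prod_norm_add_sub_sq_mul [SecondCountableTopology E] [SFinite ν]
    {μ : Measure E} [SFinite μ] (hf : Continuous f)
    (hfum : ∀ x z, ‖f (x + z) - f x‖ ≤ u x * m z) (hk : AEStronglyMeasurable k ν)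
    (hu : Integrable (fun x => u x ^ 2) μ) (hm : Integrable (fun z => m z ^ 2 * k z) ν) :
    Integrable (fun w : E × E => ‖f (w.1 + w.2) - f w.1‖ ^ 2 * k w.2) (μ.prod ν) := by
  have hcont : Continuous fun w : E × E => ‖f (w.1 + w.2) - f w.1‖ ^ 2 := by fun_prop
  exact (hu.mul_prod hm).mono (hcont.measurable.aestronglyMeasurable.mul hk.comp_snd)
    (.of_forall fun w => norm_sq_mul_le_norm_sq_mul (norm_nonneg _) (hfum w.1 w.2) (k w.2))

end SeparatedBound

theorem integrable_one_add_norm_sq_rpow_max {E : Type*} [SeminormedAddCommGroup E]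
    [MeasurableSpace E] {μ : Measure E} [IsFiniteMeasure μ] {s : ℝ}
    (h : Integrable (fun x => (1 + ‖x‖ ^ 2) ^ s) μ) :
    Integrable (fun x => (1 + ‖x‖ ^ 2) ^ max s 0) μ := by
  rcases le_total s 0 with hs | hs
  · simp [max_eq_right hs]
  · simpa [max_eq_left hs] using h

theorem integrableOn_Ioi_min_rpow_sq_mul_rpow {α p : ℝ} (hα : α < 2) (hp : 2 * p < α) :
    IntegrableOn (fun r : ℝ => min r (r ^ p) ^ 2 * r ^ (-(α + 1))) (Set.Ioi 0) := by
  rw [← Set.Ioc_union_Ioi_eq_Ioi (zero_le_one' ℝ)]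
  refine IntegrableOn.union ?_ ?_
  · have hsmall : IntegrableOn (fun r : ℝ => r ^ (1 - α)) (Set.Ioc 0 1) :=
      (intervalIntegrable_iff_integrableOn_Ioc_of_le zero_le_one).1
        (intervalIntegral.intervalIntegrable_rpow' (by linarith))
    refine hsmall.congr_fun (fun r hr => ?_) measurableSet_Ioc
    have hmin : min r (r ^ p) = r :=
      min_eq_left (Real.self_le_rpow_of_le_one hr.1.le hr.2 (by linarith))
    dsimp only
    rw [hmin, ← Real.rpow_natCast, ← Real.rpow_add hr.1]
    congr 1
    push_cast
    ring
  · have hlarge : IntegrableOn (fun r : ℝ => r ^ (2 * p - α - 1)) (Set.Ioi 1) :=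
      integrableOn_Ioi_rpow_of_lt (by linarith) one_pos
    refine hlarge.congr_fun (fun r hr => ?_) measurableSet_Ioi
    have hr0 : 0 < r := one_pos.trans hr
    have hmin : min r (r ^ p) = r ^ p :=
      min_eq_right (Real.rpow_le_self_of_one_le (le_of_lt hr) (by linarith))
    dsimp only
    rw [hmin, ← Real.rpow_mul_natCast hr0.le, ← Real.rpow_add hr0]
    congr 1
    push_cast
    ring

section StableKernel

variable {E : Type*} [NormedAddCommGroup E] [NormedSpace ℝ E] [FiniteDimensional ℝ E]
  [MeasurableSpace E] [BorelSpace E] {ν : Measure E} [ν.IsAddHaarMeasure]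

theorem integrable_min_norm_rpow_sq_mul_norm_rpow {α p : ℝ} (hα : α < 2) (hp : 2 * p < α) :
    Integrable (fun z : E => min ‖z‖ (‖z‖ ^ p) ^ 2 * ‖z‖ ^ (-(α + Module.finrank ℝ E))) ν := by
  cases subsingleton_or_nontrivial E
  · exact .of_finite
  rw [integrable_fun_norm_addHaar ν
    (f := fun r : ℝ => min r (r ^ p) ^ 2 * r ^ (-(α + Module.finrank ℝ E)))]
  refine (integrableOn_Ioi_min_rpow_sq_mul_rpow hα hp).congr_fun (fun r hr => ?_) measurableSet_Ioi
  have hpow : r ^ (Module.finrank ℝ E - 1) * r ^ (-(α + Module.finrank ℝ E)) = r ^ (-(α + 1)) := by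
    rw [← Real.rpow_natCast, ← Real.rpow_add hr, Nat.cast_sub Module.finrank_pos]
    congr 1
    push_cast
    ring
  rw [smul_eq_mul, mul_left_comm, hpow]

theorem stmt15_general {F : Type*} [SeminormedAddCommGroup F] {f : E → F} {μ : Measure E}
    [IsFiniteMeasure μ] {α θ C : ℝ} {K : NNReal} (hα0 : 0 < α) (hα2 : α < 2)
    (hθ : 1 - α / 2 < θ) (hlip : LipschitzWith K f)
    (hf : ∀ x, ‖f x‖ ≤ C * (1 + ‖x‖ ^ 2) ^ ((1 - θ) / 2) + C)
    (hmom : Integrable (fun x => (1 + ‖x‖ ^ 2) ^ (1 - θ)) μ) (c : ℝ) :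
    (∀ x, IntegrableOn
      (fun z => ‖f (x + z) - f x‖ ^ 2 * (c * ‖z‖ ^ (-(α + Module.finrank ℝ E)))) {z | z ≠ 0} ν) ∧
    Integrable (fun x => ∫ z in {z | z ≠ 0},
      ‖f (x + z) - f x‖ ^ 2 * (c * ‖z‖ ^ (-(α + Module.finrank ℝ E))) ∂ν) μ := by
  set p := max (1 - θ) 0
  have hpα : 2 * p < α := by
    have : p < α / 2 := max_lt (by linarith) (by linarith)
    linarith
  have hbound := norm_add_sub_le_mul_min (le_max_right _ _) (by linarith : p ≤ 1) hlip
    (norm_le_rpow_max_of_norm_le_rpow_add hf)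
  set A : ℝ := K + (2 ^ p + 1) * (2 * C)
  have hu : Integrable (fun x => (A * (1 + ‖x‖ ^ 2) ^ (p / 2)) ^ 2) μ := by
    have hsq (x : E) : (A * (1 + ‖x‖ ^ 2) ^ (p / 2)) ^ 2 = A ^ 2 * (1 + ‖x‖ ^ 2) ^ p := by
      rw [mul_pow, ← Real.rpow_mul_natCast (by positivity), Nat.cast_ofNat,
        div_mul_cancel₀ _ two_ne_zero]
    simpa only [hsq] using (integrable_one_add_norm_sq_rpow_max hmom).const_mul (A ^ 2)
  have hm : IntegrableOn (fun z => min ‖z‖ (‖z‖ ^ p) ^ 2 *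
      (c * ‖z‖ ^ (-(α + Module.finrank ℝ E)))) {z | z ≠ 0} ν := by
    simpa only [mul_left_comm _ c] using
      ((integrable_min_norm_rpow_sq_mul_norm_rpow hα2 hpα).const_mul c).integrableOn
  have hk : AEStronglyMeasurable (fun z : E => c * ‖z‖ ^ (-(α + Module.finrank ℝ E)))
      (ν.restrict {z | z ≠ 0}) := by
    have : Measurable fun z : E => c * ‖z‖ ^ (-(α + Module.finrank ℝ E)) := by fun_prop
    exact this.aestronglyMeasurable
  exact ⟨integrable_norm_add_sub_sq_mul hlip.continuous hbound hk hm,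
    (integrable_prod_norm_add_sub_sq_mul hlip.continuous hbound hk hu hm).integral_prod_left⟩

end StableKernel

/-- Finiteness of the asymptotic variance in the superlinear regime: for `α ∈ (1,2)`,
`θ > 1 - α/2`, `f ∈ C¹(ℝ^d)` with `|∇f(x)| ≤ C₀` and `|f(x)| ≤ C₀(1+|x|²)^{(1-θ)/2} + C₀`,
and `μ` a probability measure on `ℝ^d` with `∫ (1+|x|²)^{1-θ} μ(dx) < ∞`, the asymptotic
variance `V(f) = ∫∫ [f(x+z)-f(x)]² C_{d,α} |z|^{-(α+d)} dz μ(dx)` is finite. -/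
theorem stmt15 (d : ℕ) (hd : 1 ≤ d) (α θ C₀ : ℝ) (hα1 : 1 < α) (hα2 : α < 2)
    (hθ : 1 - α / 2 < θ) (hC₀ : 0 < C₀)
    (f : EuclideanSpace ℝ (Fin d) → ℝ) (hf : ContDiff ℝ 1 f)
    (hgb : ∀ x, ‖gradient f x‖ ≤ C₀)
    (hfb : ∀ x, |f x| ≤ C₀ * (1 + ‖x‖ ^ 2) ^ ((1 - θ) / 2) + C₀)
    (μ : Measure (EuclideanSpace ℝ (Fin d))) (hμ : IsProbabilityMeasure μ)
    (hmom : Integrable (fun x : EuclideanSpace ℝ (Fin d) => (1 + ‖x‖ ^ 2) ^ (1 - θ)) μ) :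
    (∀ x : EuclideanSpace ℝ (Fin d),
      IntegrableOn
        (fun z : EuclideanSpace ℝ (Fin d) => (f (x + z) - f x) ^ 2 *
          ((α * (2 : ℝ) ^ (α - 1) * Real.pi ^ (-(d : ℝ) / 2) *
            Real.Gamma ((d + α) / 2) / Real.Gamma (1 - α / 2)) * ‖z‖ ^ (-(α + d))))
        {z : EuclideanSpace ℝ (Fin d) | z ≠ 0}) ∧
    Integrable (fun x : EuclideanSpace ℝ (Fin d) =>
      ∫ z in {z : EuclideanSpace ℝ (Fin d) | z ≠ 0},
        (f (x + z) - f x) ^ 2 *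
          ((α * (2 : ℝ) ^ (α - 1) * Real.pi ^ (-(d : ℝ) / 2) *
            Real.Gamma ((d + α) / 2) / Real.Gamma (1 - α / 2)) * ‖z‖ ^ (-(α + d)))) μ := by
  have hlip : LipschitzWith ⟨C₀, hC₀.le⟩ f :=
    lipschitzWith_of_norm_gradient_le (hf.differentiable one_ne_zero) hgb
  simpa only [Real.norm_eq_abs, sq_abs, finrank_euclideanSpace_fin] using
    stmt15_general (by linarith) hα2 hθ hlip hfb hmom _
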